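/- Weak Poincaré inequality: let V(x) = ⟨x⟩^γ with γ ∈ (0,1). There exists λ > 0 such that for every smooth compactly supported u : ℝ^d → ℝ satisfying ∫ u e^{-V} ⟨x⟩^{2(1-γ)} dx = 0, one has ∫ u² ⟨x⟩^{2(γ-1)} e^{-V} dx ≤ λ ∫ |∇u|² e^{-V} dx. -/

import Mathlib

open MeasureTheory Real

noncomputable section

open Filter Topology Asymptotics Module Metric
open scoped ENNReal NNReal

/-!
Write `⟨x⟩ = (1 + ‖x‖²)^{1/2}` and `V x = ⟨x⟩^γ`. The field `⟨x⟩^{γ-2} e^{-V} x` has divergence at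
most `-(γ/2) ⟨x⟩^{2(γ-1)} e^{-V}` outside a ball `B`. Testing this drift condition against `v²`,
integrating by parts and absorbing the cross term by Cauchy-Schwarz bounds
`∫ v² ⟨x⟩^{2(γ-1)} e^{-V}` by `∫ |∇v|² e^{-V}` and `∫_B v²`. For `v = u - m` with a suitable
constant `m`, the classical Poincaré inequality on `B` controls the last term. Finally, the
mean-zero condition on `u` bounds `m²` by the weighted `L²` norm of `u - m`.
-/

section ConvexPoincare

lemma sq_lintegral_enorm_le_lintegral_enorm_sq {α F : Type*} {mα : MeasurableSpace α}
    [NormedAddCommGroup F] {μ : Measure α} [IsProbabilityMeasure μ] {f : α → F}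
    (hf : AEStronglyMeasurable f μ) : (∫⁻ a, ‖f a‖ₑ ∂μ) ^ 2 ≤ ∫⁻ a, ‖f a‖ₑ ^ 2 ∂μ := by
  calc (∫⁻ a, ‖f a‖ₑ ∂μ) ^ 2 = eLpNorm f 1 μ ^ 2 := by rw [eLpNorm_one_eq_lintegral_enorm]
    _ ≤ eLpNorm f 2 μ ^ 2 := by gcongr; exact eLpNorm_le_eLpNorm_of_exponent_le (by norm_num) hf
    _ = ∫⁻ a, ‖f a‖ₑ ^ 2 ∂μ := by
      simpa using eLpNorm_nnreal_pow_eq_lintegral (f := f) (μ := μ) (p := 2) two_ne_zero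

lemma setLIntegral_enorm_sq_eq_ofReal {X F : Type*} [TopologicalSpace X] [T2Space X]
    [MeasurableSpace X] [OpensMeasurableSpace X] [NormedAddCommGroup F] {μ : Measure X}
    [IsFiniteMeasureOnCompacts μ] {s : Set X} (hs : IsCompact s) {f : X → F} (hf : Continuous f) :
    ∫⁻ x in s, ‖f x‖ₑ ^ 2 ∂μ = ENNReal.ofReal (∫ x in s, ‖f x‖ ^ 2 ∂μ) := by
  rw [ofReal_integral_eq_lintegral_ofReal
    ((by fun_prop : Continuous fun x ↦ ‖f x‖ ^ 2).continuousOn.integrableOn_compact hs)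
    (Eventually.of_forall fun _ ↦ by positivity)]
  simp_rw [ENNReal.ofReal_pow (norm_nonneg _), ofReal_norm]

lemma lintegral_rotate {α β γ : Type*} [MeasurableSpace α] [MeasurableSpace β]
    [MeasurableSpace γ] {μ : Measure α} {ν : Measure β} {ρ : Measure γ} [SFinite μ] [SFinite ν]
    [SFinite ρ] {f : α → β → γ → ℝ≥0∞} (hf : Measurable fun p : α × β × γ ↦ f p.1 p.2.1 p.2.2) :
    ∫⁻ x, ∫⁻ y, ∫⁻ z, f x y z ∂ρ ∂ν ∂μ = ∫⁻ z, ∫⁻ x, ∫⁻ y, f x y z ∂ν ∂μ ∂ρ := by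
  have swap_inner (x : α) : ∫⁻ y, ∫⁻ z, f x y z ∂ρ ∂ν = ∫⁻ z, ∫⁻ y, f x y z ∂ν ∂ρ :=
    lintegral_lintegral_swap (hf.comp (measurable_const.prodMk measurable_id)).aemeasurable
  simp_rw [swap_inner]
  exact lintegral_lintegral_swap (Measurable.lintegral_prod_right'
    (f := fun q : (α × γ) × β ↦ f q.1.1 q.2 q.1.2)
    (hf.comp (by fun_prop : Measurable fun q : (α × γ) × β ↦ (q.1.1, q.2, q.1.2)))).aemeasurable

variable {E F : Type*} [NormedAddCommGroup E] [NormedSpace ℝ E] [NormedAddCommGroup F]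
  [NormedSpace ℝ F]

lemma enorm_sub_sq_le_lintegral_enorm_fderiv_sq {u : E → F} (hu : ContDiff ℝ 1 u) (x y : E) :
    ‖u y - u x‖ₑ ^ 2 ≤
      ‖y - x‖ₑ ^ 2 * ∫⁻ t in Set.Icc (0 : ℝ) 1, ‖fderiv ℝ u ((1 - t) • x + t • y)‖ₑ ^ 2 := by
  have hderiv (t : ℝ) : HasDerivAt (fun t : ℝ ↦ u ((1 - t) • x + t • y))
      (fderiv ℝ u ((1 - t) • x + t • y) (y - x)) t := by
    have hline : HasDerivAt (fun t : ℝ ↦ (1 - t) • x + t • y) (y - x) t := by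
      simpa only [← AffineMap.lineMap_apply_module] using
        AffineMap.hasDerivAt_lineMap (a := x) (b := y) (x := t)
    exact (hu.differentiable one_ne_zero _).hasFDerivAt.comp_hasDerivAt t hline
  have hcont : Continuous fun t : ℝ ↦ fderiv ℝ u ((1 - t) • x + t • y) :=
    (hu.continuous_fderiv one_ne_zero).comp (by fun_prop)
  have : IsProbabilityMeasure (volume.restrict (Set.Icc (0 : ℝ) 1)) := ⟨by simp⟩
  calc ‖u y - u x‖ₑ ^ 2
      ≤ (∫⁻ t in Set.Icc (0 : ℝ) 1, ‖fderiv ℝ u ((1 - t) • x + t • y)‖ₑ * ‖y - x‖ₑ) ^ 2 := by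
        have hftc := enorm_sub_le_lintegral_deriv_of_contDiffOn_Icc
          (hu.comp (by fun_prop : ContDiff ℝ 1 fun t : ℝ ↦ (1 - t) • x + t • y)).contDiffOn
          zero_le_one
        simp only [Function.comp_apply, sub_zero, one_smul, zero_smul, add_zero, sub_self,
          zero_add] at hftc
        gcongr
        refine hftc.trans (lintegral_mono fun t ↦ ?_)
        rw [show deriv (u ∘ _) t = _ from (hderiv t).deriv]
        exact ContinuousLinearMap.le_opENorm _ _
    _ = ‖y - x‖ₑ ^ 2 * (∫⁻ t in Set.Icc (0 : ℝ) 1, ‖fderiv ℝ u ((1 - t) • x + t • y)‖ₑ) ^ 2 := by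
        rw [lintegral_mul_const' _ _ enorm_ne_top, mul_pow, mul_comm]
    _ ≤ _ := by
        gcongr
        exact sq_lintegral_enorm_le_lintegral_enorm_sq hcont.aestronglyMeasurable

variable [FiniteDimensional ℝ E] [MeasurableSpace E] [BorelSpace E] {μ : Measure E}
  [μ.IsAddHaarMeasure]

lemma lintegral_comp_add_smul_le {G : E → ℝ≥0∞} (hG : Measurable G) (c : E) {t : ℝ}
    (ht : 1 / 2 ≤ t) : ∫⁻ y, G (c + t • y) ∂μ ≤ 2 ^ finrank ℝ E * ∫⁻ y, G y ∂μ := by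
  have ht0 : 0 < t := by linarith
  have hmap : ∫⁻ y, G (c + t • y) ∂μ = ∫⁻ z, G (c + z) ∂(μ.map (t • ·)) := by
    rw [lintegral_map (by fun_prop) (by fun_prop)]
  rw [hmap, Measure.map_addHaar_smul _ ht0.ne', lintegral_smul_measure,
    lintegral_add_left_eq_self G c, smul_eq_mul]
  gcongr
  rw [abs_of_pos (by positivity), ← inv_pow, ENNReal.ofReal_pow (by positivity)]
  gcongr
  rw [ENNReal.ofReal_le_ofNat, inv_le_comm₀ ht0 two_pos]
  linarith

-- One of the two weights is at least `1 / 2`; integrate first in the variable carrying it.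
lemma lintegral_lintegral_comp_segment_le {G : E → ℝ≥0∞} (hG : Measurable G) (s : Set E) (t : ℝ) :
    ∫⁻ x in s, ∫⁻ y in s, G ((1 - t) • x + t • y) ∂μ ∂μ ≤
      2 ^ finrank ℝ E * (∫⁻ z, G z ∂μ) * μ s := by
  have half (a : ℝ) {b : ℝ} (hb : 1 / 2 ≤ b) : ∫⁻ x in s, ∫⁻ y in s, G (a • x + b • y) ∂μ ∂μ ≤
      2 ^ finrank ℝ E * (∫⁻ z, G z ∂μ) * μ s := by
    rw [← setLIntegral_const]
    exact lintegral_mono fun x ↦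
      (setLIntegral_le_lintegral _ _).trans (lintegral_comp_add_smul_le hG _ hb)
  rcases le_total (1 / 2) t with ht | ht
  · exact half _ ht
  · have hG' : Measurable (Function.uncurry fun x y ↦ G ((1 - t) • x + t • y)) :=
      hG.comp (by fun_prop)
    rw [lintegral_lintegral_swap hG'.aemeasurable]
    simp_rw [add_comm ((1 - t) • _)]
    exact half t (by linarith)

lemma lintegral_lintegral_enorm_sub_sq_le {s : Set E} (hs : Convex ℝ s)
    (hsm : MeasurableSet s) (hsb : Bornology.IsBounded s) {u : E → F} (hu : ContDiff ℝ 1 u) :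
    ∫⁻ x in s, ∫⁻ y in s, ‖u y - u x‖ₑ ^ 2 ∂μ ∂μ ≤
      ediam s ^ 2 * 2 ^ finrank ℝ E * (∫⁻ z in s, ‖fderiv ℝ u z‖ₑ ^ 2 ∂μ) * μ s := by
  set G : E → ℝ≥0∞ := s.indicator fun z ↦ ‖fderiv ℝ u z‖ₑ ^ 2 with hGdef
  have hG : Measurable G :=
    ((hu.continuous_fderiv one_ne_zero).enorm.measurable.pow_const 2).indicator hsm
  have hdiam : ediam s ^ 2 ≠ ∞ := ENNReal.pow_ne_top hsb.ediam_ne_top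
  have segment {x y : E} (hx : x ∈ s) (hy : y ∈ s) : ‖u y - u x‖ₑ ^ 2 ≤
      ∫⁻ t in Set.Icc (0 : ℝ) 1, ediam s ^ 2 * G ((1 - t) • x + t • y) := by
    refine (enorm_sub_sq_le_lintegral_enorm_fderiv_sq hu x y).trans ?_
    rw [lintegral_const_mul' _ _ hdiam, ← edist_eq_enorm_sub]
    gcongr ?_ ^ 2 * ?_
    · exact edist_le_ediam_of_mem hy hx
    · refine (setLIntegral_congr_fun measurableSet_Icc fun t ht ↦ ?_).le
      have hz : (1 - t) • x + t • y ∈ s := hs hx hy (by linarith [ht.2]) ht.1 (by ring)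
      rw [hGdef, Set.indicator_of_mem hz]
  calc ∫⁻ x in s, ∫⁻ y in s, ‖u y - u x‖ₑ ^ 2 ∂μ ∂μ
      ≤ ∫⁻ x in s, ∫⁻ y in s, (∫⁻ t in Set.Icc (0 : ℝ) 1,
          ediam s ^ 2 * G ((1 - t) • x + t • y)) ∂μ ∂μ :=
        setLIntegral_mono' hsm fun x hx ↦ setLIntegral_mono' hsm fun y hy ↦ segment hx hy
    _ = ediam s ^ 2 * ∫⁻ t in Set.Icc (0 : ℝ) 1, ∫⁻ x in s, ∫⁻ y in s,
          G ((1 - t) • x + t • y) ∂μ ∂μ := by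
        have hmeas : Measurable fun p : E × E × ℝ ↦
            ediam s ^ 2 * G ((1 - p.2.2) • p.1 + p.2.2 • p.2.1) :=
          (hG.comp (by fun_prop)).const_mul _
        rw [lintegral_rotate hmeas]
        simp_rw [lintegral_const_mul' _ _ hdiam]
    _ ≤ ediam s ^ 2 * (2 ^ finrank ℝ E * (∫⁻ z, G z ∂μ) * μ s) := by
        gcongr
        refine (lintegral_mono fun t ↦ lintegral_lintegral_comp_segment_le hG s t).trans_eq ?_
        simp
    _ = _ := by rw [hGdef, lintegral_indicator hsm]; ring

lemma exists_setLIntegral_enorm_sub_sq_le {s : Set E} (hs : Convex ℝ s)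
    (hsm : MeasurableSet s) (hsb : Bornology.IsBounded s) {u : E → F} (hu : ContDiff ℝ 1 u) :
    ∃ m : F, ∫⁻ x in s, ‖u x - m‖ₑ ^ 2 ∂μ ≤
      ediam s ^ 2 * 2 ^ finrank ℝ E * ∫⁻ x in s, ‖fderiv ℝ u x‖ₑ ^ 2 ∂μ := by
  rcases eq_or_ne (μ s) 0 with h0 | h0
  · exact ⟨0, by simp [Measure.restrict_eq_zero.2 h0]⟩
  have hmeas : Measurable fun p : E × E ↦ ‖u p.2 - u p.1‖ₑ ^ 2 := by
    have := hu.continuous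
    exact (by fun_prop : Continuous fun p : E × E ↦ ‖u p.2 - u p.1‖ₑ).measurable.pow_const 2
  obtain ⟨x₀, -, hx₀⟩ := exists_le_setLAverage (μ := μ) (s := s)
    (f := fun x ↦ ∫⁻ y in s, ‖u y - u x‖ₑ ^ 2 ∂μ) h0 hsb.measure_lt_top.ne
    hmeas.lintegral_prod_right'.aemeasurable
  refine ⟨u x₀, hx₀.trans ?_⟩
  rw [setLAverage_eq]
  exact ENNReal.div_le_of_le_mul (lintegral_lintegral_enorm_sub_sq_le hs hsm hsb hu)

lemma exists_setIntegral_norm_sub_sq_le {s : Set E} (hs : Convex ℝ s) (hsc : IsCompact s)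
    {u : E → F} (hu : ContDiff ℝ 1 u) :
    ∃ m : F, ∫ x in s, ‖u x - m‖ ^ 2 ∂μ ≤
      diam s ^ 2 * 2 ^ finrank ℝ E * ∫ x in s, ‖fderiv ℝ u x‖ ^ 2 ∂μ := by
  obtain ⟨m, hm⟩ :=
    exists_setLIntegral_enorm_sub_sq_le (μ := μ) hs hsc.measurableSet hsc.isBounded hu
  refine ⟨m, ?_⟩
  have hu_sub : Continuous fun x ↦ u x - m := hu.continuous.sub continuous_const
  rw [setLIntegral_enorm_sq_eq_ofReal hsc hu_sub,
    setLIntegral_enorm_sq_eq_ofReal hsc (hu.continuous_fderiv one_ne_zero)] at hm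
  rw [← ENNReal.ofReal_le_ofReal_iff (by positivity), ENNReal.ofReal_mul (by positivity),
    ENNReal.ofReal_mul (by positivity), ENNReal.ofReal_pow diam_nonneg, diam,
    ENNReal.ofReal_toReal hsc.isBounded.ediam_ne_top]
  simpa using hm

end ConvexPoincare

lemma sq_integral_le_integral_mul_integral {α : Type*} {mα : MeasurableSpace α} {μ : Measure α}
    {f g h : α → ℝ} (hf : Integrable f μ) (hg : Integrable g μ) (hh : Integrable h μ)
    (hf0 : 0 ≤ f) (hg0 : 0 ≤ g) (hle : ∀ a, h a ^ 2 ≤ f a * g a) :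
    (∫ a, h a ∂μ) ^ 2 ≤ (∫ a, f a ∂μ) * ∫ a, g a ∂μ := by
  have pointwise (t : ℝ) (a : α) : 0 ≤ f a * (t * t) + 2 * h a * t + g a := by
    have am_gm : 2 * -(h a * t) ≤ f a * (t * t) + g a := by
      refine two_mul_le_add_of_sq_le_mul (mul_nonneg (hf0 a) (mul_self_nonneg t)) (hg0 a) ?_
      rw [neg_sq, mul_pow, ← sq, mul_right_comm]
      exact mul_le_mul_of_nonneg_right (hle a) (sq_nonneg t)
    linarith
  have discr := discrim_le_zero (a := ∫ a, f a ∂μ) (b := 2 * ∫ a, h a ∂μ) (c := ∫ a, g a ∂μ)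
    fun t ↦ by
      have hft := hf.mul_const (t * t)
      have hht := (hh.const_mul 2).mul_const t
      rw [← integral_const_mul, ← integral_mul_const, ← integral_mul_const,
        ← integral_add hft hht, ← integral_add (by exact hft.add hht) hg]
      exact integral_nonneg (pointwise t)
  rw [discrim] at discr
  linarith

section RadialIntegrationByParts

variable {E : Type*} [NormedAddCommGroup E] [NormedSpace ℝ E] [FiniteDimensional ℝ E]
  [MeasurableSpace E] [BorelSpace E] {μ : Measure E} [μ.IsAddHaarMeasure]

lemma integral_fderiv_apply_self {f : E → ℝ} (hf : Differentiable ℝ f) (hfi : Integrable f μ)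
    (hxf : Integrable (fun x ↦ f x • x) μ)
    (hxf' : Integrable (fun x ↦ (fderiv ℝ f x).smulRight x) μ) :
    ∫ x, fderiv ℝ f x x ∂μ = -(finrank ℝ E * ∫ x, f x ∂μ) := by
  let b := finBasis ℝ E
  let c (i : Fin (finrank ℝ E)) : E →L[ℝ] ℝ := (b.coord i).toContinuousLinearMap
  have hc' (i x) : fderiv ℝ (c i) x (b i) = 1 := by rw [(c i).fderiv]; simp [c]
  have hcf' (i) : Integrable (fun x ↦ c i x * fderiv ℝ f x (b i)) μ := by
    simpa [mul_comm] using (c i ∘L ContinuousLinearMap.apply ℝ E (b i)).integrable_comp hxf'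
  have by_parts (i) : ∫ x, c i x * fderiv ℝ f x (b i) ∂μ = -∫ x, f x ∂μ := by
    rw [integral_mul_fderiv_eq_neg_fderiv_mul_of_integrable (by simpa only [hc', one_mul])
      (hcf' i) (by simpa [mul_comm] using (c i).integrable_comp hxf)
      (fun x _ ↦ (c i).differentiableAt) (fun x _ ↦ hf x)]
    simp only [hc', one_mul]
  have expand (x : E) : fderiv ℝ f x x = ∑ i, c i x * fderiv ℝ f x (b i) := by
    conv_lhs => rw [← b.sum_repr x, map_sum]
    simp [c, b]
  simp_rw [expand]
  rw [integral_finsetSum _ fun i _ ↦ hcf' i]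
  simp [by_parts]

end RadialIntegrationByParts

section LipschitzGrowth

variable {E F : Type*} [NormedAddCommGroup E] [NormedAddCommGroup F]

lemma isBigO_norm_cocompact_of_lipschitzWith [ProperSpace E] {v : E → F} {K : ℝ≥0}
    (hv : LipschitzWith K v) : v =O[cocompact E] fun x ↦ ‖x‖ := by
  have hconst : (fun _ : E ↦ v 0) =O[cocompact E] fun x ↦ ‖x‖ :=
    (isLittleO_const_left.2 <| .inr <| by
      simpa [Function.comp_def] using tendsto_norm_cocompact_atTop (E := E)).isBigO
  have hdiff : (fun x ↦ v x - v 0) =O[cocompact E] fun x ↦ ‖x‖ :=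
    .of_bound K (.of_forall fun x ↦ by simpa using hv.norm_sub_le x 0)
  simpa using hdiff.add hconst

lemma isBigO_one_fderiv_of_lipschitzWith [NormedSpace ℝ E] [NormedSpace ℝ F] {v : E → F} {K : ℝ≥0}
    (hv : LipschitzWith K v) (l : Filter E) : fderiv ℝ v =O[l] fun _ ↦ (1 : ℝ) :=
  .of_bound K (.of_forall fun x ↦ by simpa using norm_fderiv_le_of_lipschitz ℝ hv)

end LipschitzGrowth

/-- The weight `⟨x⟩ ^ (2 * s) * exp (-V x)` with `V x = ⟨x⟩ ^ γ`; the exponent `s` counts powers of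
`⟨x⟩ ^ 2 = 1 + ‖x‖ ^ 2`, which keeps square roots out of the statements. -/
def gibbsWeight {E : Type*} [NormedAddCommGroup E] (γ s : ℝ) (x : E) : ℝ :=
  (1 + ‖x‖ ^ 2) ^ s * exp (-(1 + ‖x‖ ^ 2) ^ (γ / 2))

section Weight

variable {E F : Type*} [NormedAddCommGroup E] [NormedAddCommGroup F] [NormedSpace ℝ F]
  {γ : ℝ}

lemma gibbsWeight_pos (γ s : ℝ) (x : E) : 0 < gibbsWeight γ s x := by
  unfold gibbsWeight; positivity

lemma continuous_gibbsWeight (γ s : ℝ) : Continuous (gibbsWeight γ s : E → ℝ) := by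
  have hpow (r : ℝ) : Continuous fun x : E ↦ (1 + ‖x‖ ^ 2) ^ r :=
    Continuous.rpow_const (by fun_prop) fun x ↦ Or.inl (by positivity)
  exact (hpow s).mul (hpow (γ / 2)).neg.rexp

lemma rpow_mul_gibbsWeight (γ r s : ℝ) (x : E) :
    (1 + ‖x‖ ^ 2) ^ r * gibbsWeight γ s x = gibbsWeight γ (r + s) x := by
  rw [gibbsWeight, gibbsWeight, rpow_add (by positivity), mul_assoc]

lemma gibbsWeight_mul_gibbsWeight (γ : ℝ) {r s r' s' : ℝ} (h : r + s = r' + s') (x : E) :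
    gibbsWeight γ r x * gibbsWeight γ s x = gibbsWeight γ r' x * gibbsWeight γ s' x := by
  have hpos : 0 < 1 + ‖x‖ ^ 2 := by positivity
  simp only [gibbsWeight]
  rw [mul_mul_mul_comm, ← rpow_add hpos, h, rpow_add hpos, mul_mul_mul_comm]

lemma norm_sq_mul_gibbsWeight (γ s : ℝ) (x : E) :
    ‖x‖ ^ 2 * gibbsWeight γ s x = gibbsWeight γ (1 + s) x - gibbsWeight γ s x := by
  rw [← rpow_mul_gibbsWeight, rpow_one]
  ring

section Asymptotics

variable [ProperSpace E]

lemma tendsto_one_add_norm_sq_cocompact :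
    Tendsto (fun x : E ↦ 1 + ‖x‖ ^ 2) (cocompact E) atTop :=
  tendsto_atTop_add_const_left _ _
    ((tendsto_pow_atTop two_ne_zero).comp tendsto_norm_cocompact_atTop)

lemma gibbsWeight_isLittleO_gibbsWeight (γ : ℝ) {s t : ℝ} (hst : s < t) :
    (gibbsWeight γ s : E → ℝ) =o[cocompact E] gibbsWeight γ t := by
  have decay : (fun x : E ↦ (1 + ‖x‖ ^ 2) ^ (s - t)) =o[cocompact E] fun _ ↦ (1 : ℝ) := by
    rw [isLittleO_one_iff, ← neg_sub]
    exact (tendsto_rpow_neg_atTop (sub_pos.2 hst)).comp tendsto_one_add_norm_sq_cocompact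
  refine (decay.mul_isBigO (isBigO_refl (gibbsWeight γ t) _)).congr (fun x ↦ ?_)
    fun x ↦ one_mul _
  rw [rpow_mul_gibbsWeight, sub_add_cancel]

lemma gibbsWeight_isLittleO_rpow (hγ : 0 < γ) (s t : ℝ) :
    gibbsWeight γ s =o[cocompact E] fun x ↦ (1 + ‖x‖ ^ 2) ^ t := by
  have hexp := (isLittleO_exp_neg_mul_rpow_atTop one_pos ((t - s) / (γ / 2))).comp_tendsto
    ((tendsto_rpow_atTop (half_pos hγ)).comp (tendsto_one_add_norm_sq_cocompact (E := E)))
  refine ((isBigO_refl (fun x : E ↦ (1 + ‖x‖ ^ 2) ^ s) _).mul_isLittleO hexp).congr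
    (fun x ↦ by simp [gibbsWeight]) fun x ↦ ?_
  have hpos : 0 < 1 + ‖x‖ ^ 2 := by positivity
  simp only [Function.comp_apply]
  rw [← rpow_mul hpos.le, mul_div_cancel₀ _ (half_pos hγ).ne', ← rpow_add hpos, add_sub_cancel]

end Asymptotics

section Integrability

variable [NormedSpace ℝ E] [FiniteDimensional ℝ E] [MeasurableSpace E] [BorelSpace E]
  {μ : Measure E} [μ.IsAddHaarMeasure]

lemma integrable_gibbsWeight_smul (hγ : 0 < γ) (s : ℝ) {h : E → F} (hc : Continuous h) {n : ℕ}
    (hn : h =O[cocompact E] fun x ↦ ‖x‖ ^ n) : Integrable (fun x ↦ gibbsWeight γ s x • h x) μ := by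
  have norm_pow_le (x : E) : ‖x‖ ^ n ≤ (1 + ‖x‖ ^ 2) ^ (n / 2 : ℝ) :=
    calc ‖x‖ ^ n = (‖x‖ ^ 2) ^ (n / 2 : ℝ) := by
          rw [← rpow_natCast_mul (norm_nonneg x), Nat.cast_ofNat, mul_div_cancel₀ _ two_ne_zero,
            rpow_natCast]
      _ ≤ _ := by gcongr; linarith
  have hn' : h =O[cocompact E] fun x ↦ (1 + ‖x‖ ^ 2) ^ (n / 2 : ℝ) :=
    hn.trans (isBigO_of_le _ fun x ↦ by
      rw [norm_of_nonneg (by positivity), norm_of_nonneg (by positivity)]; exact norm_pow_le x)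
  have decay : (fun x ↦ gibbsWeight γ s x • h x) =O[cocompact E]
      fun x ↦ (1 + ‖x‖ ^ 2) ^ (-(finrank ℝ E + 1 : ℝ) / 2) :=
    ((gibbsWeight_isLittleO_rpow hγ s _).isBigO.smul hn').congr_right fun x ↦ by
      rw [smul_eq_mul, ← rpow_add (by positivity), sub_add_cancel]
  exact ((continuous_gibbsWeight γ s).smul hc).locallyIntegrable.integrable_of_isBigO_cocompact
    decay ((integrable_rpow_neg_one_add_norm_sq (lt_add_one _)).integrableAtFilter _)

lemma integrable_gibbsWeight (hγ : 0 < γ) (s : ℝ) :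
    Integrable (gibbsWeight γ s : E → ℝ) μ := by
  simpa using integrable_gibbsWeight_smul (μ := μ) hγ s (continuous_const (y := (1 : ℝ))) (n := 0)
    (by simpa using isBigO_refl (fun _ ↦ (1 : ℝ)) (cocompact E))

lemma integral_gibbsWeight_pos (hγ : 0 < γ) (s : ℝ) : 0 < ∫ x : E, gibbsWeight γ s x ∂μ :=
  integral_pos_of_integrable_nonneg_nonzero (x := 0) (continuous_gibbsWeight γ s)
    (integrable_gibbsWeight hγ s) (fun x ↦ (gibbsWeight_pos γ s x).le) (gibbsWeight_pos γ s 0).ne'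

end Integrability

end Weight

/-- The divergence of the vector field `x ↦ gibbsWeight γ s x • x`. -/
def gibbsFieldDiv {E : Type*} [NormedAddCommGroup E] [NormedSpace ℝ E] (γ s : ℝ) (x : E) : ℝ :=
  finrank ℝ E * gibbsWeight γ s x + fderiv ℝ (gibbsWeight γ s) x x

section Drift

variable {E : Type*} [NormedAddCommGroup E] [InnerProductSpace ℝ E]

lemma hasFDerivAt_gibbsWeight (γ s : ℝ) (x : E) :
    HasFDerivAt (gibbsWeight γ s)
      ((2 * s * gibbsWeight γ (s - 1) x - γ * gibbsWeight γ (s + γ / 2 - 1) x) • innerSL ℝ x)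
      x := by
  have hpos : 0 < 1 + ‖x‖ ^ 2 := by positivity
  have hbase : HasFDerivAt (fun x : E ↦ 1 + ‖x‖ ^ 2) (2 • innerSL ℝ x) x :=
    (hasStrictFDerivAt_norm_sq x).hasFDerivAt.const_add 1
  have hprofile : HasDerivAt (fun r : ℝ ↦ r ^ s * exp (-r ^ (γ / 2))) _ (1 + ‖x‖ ^ 2) :=
    (hasDerivAt_rpow_const (.inl hpos.ne')).mul (hasDerivAt_rpow_const (.inl hpos.ne')).neg.exp
  refine (hprofile.comp_hasFDerivAt x hbase).congr_fderiv ?_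
  rw [← Nat.cast_smul_eq_nsmul ℝ, smul_smul]
  congr 1
  rw [gibbsWeight, gibbsWeight, add_sub_assoc, rpow_add hpos s]
  simp only [Pi.neg_apply, Nat.cast_ofNat]
  ring

lemma gibbsFieldDiv_eq (γ s : ℝ) (x : E) :
    gibbsFieldDiv γ s x = (finrank ℝ E + 2 * s) * gibbsWeight γ s x
      - 2 * s * gibbsWeight γ (s - 1) x - γ * gibbsWeight γ (s + γ / 2) x
      + γ * gibbsWeight γ (s + γ / 2 - 1) x := by
  have hfst := norm_sq_mul_gibbsWeight γ (s - 1) x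
  have hsnd := norm_sq_mul_gibbsWeight γ (s + γ / 2 - 1) x
  rw [add_sub_cancel] at hfst hsnd
  rw [gibbsFieldDiv, (hasFDerivAt_gibbsWeight γ s x).fderiv]
  simp only [smul_apply, innerSL_apply_apply, real_inner_self_eq_norm_sq, smul_eq_mul]
  linear_combination 2 * s * hfst - γ * hsnd

lemma continuous_gibbsFieldDiv (γ s : ℝ) : Continuous (gibbsFieldDiv γ s : E → ℝ) := by
  have hw := continuous_gibbsWeight (E := E) γ
  simp only [funext (gibbsFieldDiv_eq γ s)]
  fun_prop

variable [FiniteDimensional ℝ E]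

-- The three remaining exponents are all smaller than `γ - 1`.
lemma gibbsFieldDiv_add_isLittleO (hγ : 0 < γ) :
    (fun x : E ↦ gibbsFieldDiv γ (γ / 2 - 1) x + γ * gibbsWeight γ (γ - 1) x)
      =o[cocompact E] gibbsWeight γ (γ - 1) := by
  have lower {s : ℝ} (hs : s < γ - 1) (c : ℝ) :
      (fun x : E ↦ c * gibbsWeight γ s x) =o[cocompact E] gibbsWeight γ (γ - 1) :=
    (gibbsWeight_isLittleO_gibbsWeight γ hs).const_mul_left c
  refine (((lower (s := γ / 2 - 1) (by linarith) (finrank ℝ E + γ - 2)).sub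
    (lower (s := γ / 2 - 1 - 1) (by linarith) (γ - 2))).add
    (lower (s := γ - 1 - 1) (by linarith) γ)).congr_left fun x ↦ ?_
  rw [gibbsFieldDiv_eq, show γ / 2 - 1 + γ / 2 = γ - 1 by ring]
  ring

lemma exists_gibbsFieldDiv_le (hγ : 0 < γ) : ∃ R b : ℝ, 0 ≤ b ∧ ∀ x : E,
    gibbsFieldDiv γ (γ / 2 - 1) x ≤
      -(γ / 2) * gibbsWeight γ (γ - 1) x + (closedBall 0 R).indicator (fun _ ↦ b) x := by
  obtain ⟨R, hR⟩ := mem_cocompact_iff_closedBall_compl_subset 0 |>.1 <|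
    (gibbsFieldDiv_add_isLittleO (E := E) hγ).bound (half_pos hγ)
  have hcont : Continuous fun x : E ↦
      gibbsFieldDiv γ (γ / 2 - 1) x + γ / 2 * gibbsWeight γ (γ - 1) x :=
    (continuous_gibbsFieldDiv _ _).add ((continuous_gibbsWeight _ _).const_mul _)
  obtain ⟨b, hb⟩ := (isCompact_closedBall (0 : E) R).exists_bound_of_continuousOn hcont.continuousOn
  refine ⟨R, max b 0, le_max_right _ _, fun x ↦ ?_⟩
  by_cases hx : x ∈ closedBall 0 R
  · rw [Set.indicator_of_mem hx]
    linarith [(le_abs_self _).trans (hb x hx), le_max_left b 0]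
  · have hfar := hR hx
    rw [Set.mem_ofPred_eq, norm_of_nonneg (gibbsWeight_pos _ _ _).le] at hfar
    rw [Set.indicator_of_notMem hx]
    linarith [(le_abs_self _).trans hfar]

variable [MeasurableSpace E] [BorelSpace E] {μ : Measure E} [μ.IsAddHaarMeasure]

lemma integrable_gibbsWeight_mul_smulRight_fderiv (hγ : 0 < γ) (s : ℝ) {h : E → ℝ}
    (hc : ContDiff ℝ 1 h) {n m : ℕ} (hn : h =O[cocompact E] fun x ↦ ‖x‖ ^ n)
    (hm : fderiv ℝ h =O[cocompact E] fun x ↦ ‖x‖ ^ m) :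
    Integrable (fun x ↦ (fderiv ℝ (fun x ↦ gibbsWeight γ s x * h x) x).smulRight x) μ := by
  have hcont := hc.continuous
  have hdh : Integrable (fun x ↦ gibbsWeight γ s x • (fderiv ℝ h x).smulRight x) μ := by
    refine integrable_gibbsWeight_smul hγ s (n := m + 1) (by fun_prop) (.of_norm_left ?_)
    simp_rw [ContinuousLinearMap.norm_smulRight_apply, pow_succ]
    exact hm.norm_left.mul (isBigO_refl _ _)
  have hdw (s : ℝ) :
      Integrable (fun x ↦ gibbsWeight γ s x • (h x • (innerSL ℝ x).smulRight x)) μ := by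
    refine integrable_gibbsWeight_smul hγ s (n := n + 2) (by fun_prop) (.of_norm_left ?_)
    simp_rw [norm_smul, ContinuousLinearMap.norm_smulRight_apply, innerSL_apply_norm, ← sq, pow_add]
    exact hn.norm_left.mul (isBigO_refl _ _)
  refine ((hdh.add ((hdw (s - 1)).smul (2 * s))).sub ((hdw (s + γ / 2 - 1)).smul γ)).congr
    (.of_forall fun x ↦ ?_)
  simp only [Pi.add_apply, Pi.sub_apply, Pi.smul_apply]
  rw [fderiv_fun_mul (hasFDerivAt_gibbsWeight γ s x).differentiableAt
    (hc.differentiable one_ne_zero x), (hasFDerivAt_gibbsWeight γ s x).fderiv]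
  ext y
  simp only [add_apply, sub_apply, smul_apply, ContinuousLinearMap.smulRight_apply, smul_eq_mul]
  module

lemma integrable_gibbsFieldDiv_mul (hγ : 0 < γ) (s : ℝ) {h : E → ℝ} (hc : Continuous h) {n : ℕ}
    (hn : h =O[cocompact E] fun x ↦ ‖x‖ ^ n) :
    Integrable (fun x ↦ gibbsFieldDiv γ s x * h x) μ := by
  have hw (s : ℝ) : Integrable (fun x ↦ gibbsWeight γ s x * h x) μ :=
    integrable_gibbsWeight_smul hγ s hc hn
  refine (((((hw s).const_mul (finrank ℝ E + 2 * s)).sub ((hw (s - 1)).const_mul (2 * s))).sub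
    ((hw (s + γ / 2)).const_mul γ)).add ((hw (s + γ / 2 - 1)).const_mul γ)).congr
    (.of_forall fun x ↦ ?_)
  simp only [Pi.add_apply, Pi.sub_apply, gibbsFieldDiv_eq]
  ring

lemma integral_gibbsWeight_mul_fderiv_self (hγ : 0 < γ) (s : ℝ) {h : E → ℝ} (hc : ContDiff ℝ 1 h)
    {n m : ℕ} (hn : h =O[cocompact E] fun x ↦ ‖x‖ ^ n)
    (hm : fderiv ℝ h =O[cocompact E] fun x ↦ ‖x‖ ^ m) :
    ∫ x, gibbsWeight γ s x * fderiv ℝ h x x ∂μ = -∫ x, gibbsFieldDiv γ s x * h x ∂μ := by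
  have hcont := hc.continuous
  have hdiff := hc.differentiable one_ne_zero
  have hwdiff : Differentiable ℝ (gibbsWeight γ s : E → ℝ) :=
    fun x ↦ (hasFDerivAt_gibbsWeight γ s x).differentiableAt
  have hwh : Integrable (fun x ↦ gibbsWeight γ s x * h x) μ :=
    integrable_gibbsWeight_smul hγ s hcont hn
  have hxwh : Integrable (fun x ↦ (gibbsWeight γ s x * h x) • x) μ := by
    simp_rw [mul_smul]
    refine integrable_gibbsWeight_smul hγ s (n := n + 1) (by fun_prop) ?_
    simp_rw [pow_succ]
    exact hn.smul (isBigO_refl _ _).norm_right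
  have hwdh : Integrable (fun x ↦ gibbsWeight γ s x * fderiv ℝ h x x) μ := by
    refine integrable_gibbsWeight_smul hγ s (n := m + 1) (by fun_prop) ?_
    refine .trans (.of_bound 1 (.of_forall fun x ↦ ?_)) (hm.norm_left.mul (isBigO_refl (‖·‖) _))
    simpa using (fderiv ℝ h x).le_opNorm x
  have product_rule (x : E) : fderiv ℝ (fun x ↦ gibbsWeight γ s x * h x) x x =
      gibbsWeight γ s x * fderiv ℝ h x x
        + gibbsFieldDiv γ s x * h x - finrank ℝ E * (gibbsWeight γ s x * h x) := by
    rw [fderiv_fun_mul (hwdiff x) (hdiff x), gibbsFieldDiv]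
    simp only [add_apply, smul_apply, smul_eq_mul]
    ring
  have hdiv := integrable_gibbsFieldDiv_mul (μ := μ) hγ s hcont hn
  have radial := integral_fderiv_apply_self (f := fun x ↦ gibbsWeight γ s x * h x)
    (hwdiff.mul hdiff) hwh hxwh
    (integrable_gibbsWeight_mul_smulRight_fderiv hγ s hc hn hm)
  simp_rw [product_rule] at radial
  rw [integral_sub (by exact hwdh.add hdiv) (hwh.const_mul _), integral_add hwdh hdiv,
    integral_const_mul] at radial
  linarith

end Drift

lemma exists_setIntegral_le_mul_integral_mul {X : Type*} [TopologicalSpace X] [T2Space X]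
    [MeasurableSpace X] [OpensMeasurableSpace X] {μ : Measure X} {s : Set X} (hs : IsCompact s)
    {w : X → ℝ} (hw : Continuous w) (hpos : ∀ x, 0 < w x) :
    ∃ L > 0, ∀ g : X → ℝ, 0 ≤ g → Integrable (fun x ↦ w x * g x) μ →
      ∫ x in s, g x ∂μ ≤ L * ∫ x, w x * g x ∂μ := by
  obtain ⟨c, hc, hcw⟩ := hs.exists_forall_le' hw.continuousOn fun x _ ↦ hpos x
  refine ⟨c⁻¹, inv_pos.2 hc, fun g hg hint ↦ ?_⟩
  calc ∫ x in s, g x ∂μ ≤ ∫ x in s, c⁻¹ * (w x * g x) ∂μ := by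
        refine integral_mono_of_nonneg (.of_forall hg) (hint.integrableOn.const_mul _) ?_
        refine (ae_restrict_iff' hs.measurableSet).2 (.of_forall fun x hx ↦ ?_)
        exact (le_mul_of_one_le_left (hg x) ((one_le_inv_mul₀ hc).2 (hcw x hx))).trans_eq
          (mul_assoc _ _ _)
    _ ≤ c⁻¹ * ∫ x, w x * g x ∂μ := by
        rw [integral_const_mul]
        exact mul_le_mul_of_nonneg_left
          (setIntegral_le_integral hint (.of_forall fun x ↦ mul_nonneg (hpos x).le (hg x)))
          (inv_nonneg.2 hc.le)

section WeightedNorms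

variable {E : Type*} [NormedAddCommGroup E] [NormedSpace ℝ E] [FiniteDimensional ℝ E]
  [MeasurableSpace E] [BorelSpace E] {μ : Measure E} [μ.IsAddHaarMeasure] {γ : ℝ} {K : ℝ≥0}

lemma integrable_gibbsWeight_mul_pow (hγ : 0 < γ) (s : ℝ) {v : E → ℝ} (hv : LipschitzWith K v)
    (n : ℕ) : Integrable (fun x ↦ gibbsWeight γ s x * v x ^ n) μ :=
  integrable_gibbsWeight_smul hγ s (hv.continuous.pow n)
    ((isBigO_norm_cocompact_of_lipschitzWith hv).pow n)

lemma integrable_gibbsWeight_mul_norm_fderiv_sq (hγ : 0 < γ) (s : ℝ) {v : E → ℝ}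
    (hc : ContDiff ℝ 1 v) (hv : LipschitzWith K v) :
    Integrable (fun x ↦ gibbsWeight γ s x * ‖fderiv ℝ v x‖ ^ 2) μ := by
  refine integrable_gibbsWeight_smul hγ s (n := 0) (by fun_prop) ?_
  simpa using (isBigO_one_fderiv_of_lipschitzWith hv (cocompact E)).norm_left.pow 2

lemma integrable_gibbsWeight_mul_mul_fderiv_self (hγ : 0 < γ) (s : ℝ) {v : E → ℝ}
    (hc : ContDiff ℝ 1 v) (hv : LipschitzWith K v) :
    Integrable (fun x ↦ gibbsWeight γ s x * (v x * fderiv ℝ v x x)) μ := by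
  have hcont := hc.continuous
  have hgrowth : (fun x ↦ fderiv ℝ v x x) =O[cocompact E] fun x ↦ ‖x‖ :=
    .of_bound K (.of_forall fun x ↦ by
      simpa using (fderiv ℝ v x).le_of_opNorm_le (norm_fderiv_le_of_lipschitz ℝ hv) x)
  refine integrable_gibbsWeight_smul hγ s (n := 2) (by fun_prop) ?_
  simp_rw [sq]
  exact (isBigO_norm_cocompact_of_lipschitzWith hv).mul hgrowth

lemma sq_integral_gibbsWeight_mul_mul_fderiv_self_le (hγ : 0 < γ) {v : E → ℝ}
    (hc : ContDiff ℝ 1 v) (hv : LipschitzWith K v) :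
    (∫ x, gibbsWeight γ (γ / 2 - 1) x * (v x * fderiv ℝ v x x) ∂μ) ^ 2 ≤
      (∫ x, gibbsWeight γ (γ - 1) x * v x ^ 2 ∂μ) *
        ∫ x, gibbsWeight γ 0 x * ‖fderiv ℝ v x‖ ^ 2 ∂μ := by
  refine sq_integral_le_integral_mul_integral (integrable_gibbsWeight_mul_pow hγ _ hv 2)
    (integrable_gibbsWeight_mul_norm_fderiv_sq hγ _ hc hv)
    (integrable_gibbsWeight_mul_mul_fderiv_self hγ _ hc hv)
    (fun x ↦ mul_nonneg (gibbsWeight_pos _ _ _).le (sq_nonneg _))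
    (fun x ↦ mul_nonneg (gibbsWeight_pos _ _ _).le (sq_nonneg _)) fun x ↦ ?_
  have hfderiv : fderiv ℝ v x x ^ 2 ≤ ‖fderiv ℝ v x‖ ^ 2 * ‖x‖ ^ 2 := by
    rw [← mul_pow, ← sq_abs]
    gcongr
    exact (fderiv ℝ v x).le_opNorm x
  have hweight : ‖x‖ ^ 2 * gibbsWeight γ (γ / 2 - 1) x ^ 2 ≤
      gibbsWeight γ (γ - 1) x * gibbsWeight γ 0 x := by
    rw [gibbsWeight_mul_gibbsWeight γ (r' := 1 + (γ / 2 - 1)) (s' := γ / 2 - 1) (by ring),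
      sq (gibbsWeight γ _ x), ← mul_assoc, norm_sq_mul_gibbsWeight]
    gcongr
    · exact (gibbsWeight_pos _ _ _).le
    · exact sub_le_self _ (gibbsWeight_pos _ _ _).le
  calc (gibbsWeight γ (γ / 2 - 1) x * (v x * fderiv ℝ v x x)) ^ 2
      = gibbsWeight γ (γ / 2 - 1) x ^ 2 * v x ^ 2 * fderiv ℝ v x x ^ 2 := by ring
    _ ≤ gibbsWeight γ (γ / 2 - 1) x ^ 2 * v x ^ 2 * (‖fderiv ℝ v x‖ ^ 2 * ‖x‖ ^ 2) := by gcongr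
    _ = ‖x‖ ^ 2 * gibbsWeight γ (γ / 2 - 1) x ^ 2 * (v x ^ 2 * ‖fderiv ℝ v x‖ ^ 2) := by ring
    _ ≤ gibbsWeight γ (γ - 1) x * gibbsWeight γ 0 x * (v x ^ 2 * ‖fderiv ℝ v x‖ ^ 2) := by gcongr
    _ = _ := by ring

lemma sq_mul_integral_gibbsWeight_le (hγ : 0 < γ) (s t : ℝ) {u : E → ℝ} (hu : LipschitzWith K u)
    (hmean : ∫ x, gibbsWeight γ t x * u x ∂μ = 0) (m : ℝ) :
    (m * ∫ x, gibbsWeight γ t x ∂μ) ^ 2 ≤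
      (∫ x, gibbsWeight γ s x * (u x - m) ^ 2 ∂μ) * ∫ x, gibbsWeight γ (2 * t - s) x ∂μ := by
  have hsub : LipschitzWith K fun x ↦ u x - m := by simpa using hu.sub (.const m)
  have hshift : ∫ x, gibbsWeight γ t x * (u x - m) ∂μ = -(m * ∫ x, gibbsWeight γ t x ∂μ) := by
    have hu1 : Integrable (fun x ↦ gibbsWeight γ t x * u x) μ := by
      simpa using integrable_gibbsWeight_mul_pow hγ t hu 1
    simp_rw [mul_sub]
    rw [integral_sub hu1 ((integrable_gibbsWeight hγ t).mul_const m), hmean, integral_mul_const,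
      zero_sub, mul_comm]
  rw [← neg_sq, ← hshift]
  refine sq_integral_le_integral_mul_integral (integrable_gibbsWeight_mul_pow hγ s hsub 2)
    (integrable_gibbsWeight hγ _) (by simpa using integrable_gibbsWeight_mul_pow hγ t hsub 1)
    (fun x ↦ mul_nonneg (gibbsWeight_pos _ _ _).le (sq_nonneg _))
    (fun x ↦ (gibbsWeight_pos _ _ _).le) fun x ↦ ?_
  rw [mul_pow, sq (gibbsWeight γ t x),
    gibbsWeight_mul_gibbsWeight γ (r' := s) (s' := 2 * t - s) (by ring), mul_right_comm]

lemma integral_gibbsWeight_mul_sq_le_add (hγ : 0 < γ) (s : ℝ) {u : E → ℝ}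
    (hu : LipschitzWith K u) (m : ℝ) :
    ∫ x, gibbsWeight γ s x * u x ^ 2 ∂μ ≤
      2 * ∫ x, gibbsWeight γ s x * (u x - m) ^ 2 ∂μ + 2 * m ^ 2 * ∫ x, gibbsWeight γ s x ∂μ := by
  have hsub : LipschitzWith K fun x ↦ u x - m := by simpa using hu.sub (.const m)
  have hw := (integrable_gibbsWeight (μ := μ) (E := E) hγ s).const_mul (2 * m ^ 2)
  have hQ := (integrable_gibbsWeight_mul_pow (μ := μ) hγ s hsub 2).const_mul 2
  rw [← integral_const_mul, ← integral_const_mul, ← integral_add hQ hw]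
  refine integral_mono (integrable_gibbsWeight_mul_pow hγ s hu 2) (hQ.add hw) fun x ↦ ?_
  calc gibbsWeight γ s x * u x ^ 2
      ≤ gibbsWeight γ s x * (2 * ((u x - m) ^ 2 + m ^ 2)) := by
        gcongr
        · exact (gibbsWeight_pos _ _ _).le
        · simpa using add_sq_le (a := u x - m) (b := m)
    _ = _ := by ring

lemma integral_gibbsWeight_mul_sq_le_of_integral_eq_zero (hγ : 0 < γ) (s t : ℝ) {u : E → ℝ}
    (hu : LipschitzWith K u) (hmean : ∫ x, gibbsWeight γ t x * u x ∂μ = 0) (m : ℝ) :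
    ∫ x, gibbsWeight γ s x * u x ^ 2 ∂μ ≤
      (2 + 2 * (∫ x, gibbsWeight γ s x ∂μ) * (∫ x, gibbsWeight γ (2 * t - s) x ∂μ) /
        (∫ x, gibbsWeight γ t x ∂μ) ^ 2) * ∫ x, gibbsWeight γ s x * (u x - m) ^ 2 ∂μ := by
  have hm := sq_mul_integral_gibbsWeight_le (μ := μ) hγ s t hu hmean m
  have hX := integral_gibbsWeight_pos (E := E) (μ := μ) hγ s
  have hZ := integral_gibbsWeight_pos (E := E) (μ := μ) hγ t
  rw [mul_pow, ← le_div_iff₀ (by positivity)] at hm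
  calc _ ≤ 2 * ∫ x, gibbsWeight γ s x * (u x - m) ^ 2 ∂μ
          + 2 * m ^ 2 * ∫ x, gibbsWeight γ s x ∂μ := integral_gibbsWeight_mul_sq_le_add hγ s hu m
    _ ≤ 2 * ∫ x, gibbsWeight γ s x * (u x - m) ^ 2 ∂μ
          + 2 * ((∫ x, gibbsWeight γ s x * (u x - m) ^ 2 ∂μ)
            * (∫ x, gibbsWeight γ (2 * t - s) x ∂μ) / (∫ x, gibbsWeight γ t x ∂μ) ^ 2)
            * ∫ x, gibbsWeight γ s x ∂μ := by gcongr
    _ = _ := by ring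

end WeightedNorms

section WeightedPoincare

variable {E : Type*} [NormedAddCommGroup E] [InnerProductSpace ℝ E] [FiniteDimensional ℝ E]
  [MeasurableSpace E] [BorelSpace E] {μ : Measure E} [μ.IsAddHaarMeasure] {γ : ℝ}

lemma integral_gibbsFieldDiv_mul_sq (hγ : 0 < γ) (s : ℝ) {v : E → ℝ} {K : ℝ≥0}
    (hc : ContDiff ℝ 1 v) (hv : LipschitzWith K v) :
    ∫ x, gibbsFieldDiv γ s x * v x ^ 2 ∂μ =
      -(2 * ∫ x, gibbsWeight γ s x * (v x * fderiv ℝ v x x) ∂μ) := by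
  have hderiv (x : E) : fderiv ℝ (fun y ↦ v y ^ 2) x = (2 * v x) • fderiv ℝ v x := by
    simp [fderiv_fun_pow 2 (hc.differentiable one_ne_zero x)]
  have hgrowth := isBigO_norm_cocompact_of_lipschitzWith hv
  have hgrowth' : fderiv ℝ (fun y ↦ v y ^ 2) =O[cocompact E] fun x ↦ ‖x‖ ^ 1 := by
    rw [funext hderiv]
    simpa using (hgrowth.const_mul_left 2).smul (isBigO_one_fderiv_of_lipschitzWith hv _)
  have by_parts := integral_gibbsWeight_mul_fderiv_self (μ := μ) hγ s (hc.pow 2) (hgrowth.pow 2)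
    hgrowth'
  rw [← integral_const_mul, eq_neg_iff_add_eq_zero, ← eq_neg_iff_add_eq_zero.1 by_parts, add_comm]
  congr 2 with x
  rw [hderiv, smul_apply, smul_eq_mul]
  ring

lemma exists_integral_gibbsWeight_mul_sq_le (hγ : 0 < γ) : ∃ R b : ℝ, 0 ≤ b ∧
    ∀ (v : E → ℝ) (K : ℝ≥0), ContDiff ℝ 1 v → LipschitzWith K v →
      γ / 4 * ∫ x, gibbsWeight γ (γ - 1) x * v x ^ 2 ∂μ ≤
        4 / γ * ∫ x, gibbsWeight γ 0 x * ‖fderiv ℝ v x‖ ^ 2 ∂μ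
          + b * ∫ x in closedBall 0 R, v x ^ 2 ∂μ := by
  obtain ⟨R, b, hb, hdrift⟩ := exists_gibbsFieldDiv_le (E := E) hγ
  refine ⟨R, b, hb, fun v K hc hv ↦ ?_⟩
  have hQ := integrable_gibbsWeight_mul_pow (μ := μ) hγ (γ - 1) hv 2
  have hball : IntegrableOn (fun x ↦ b * v x ^ 2) (closedBall 0 R) μ :=
    ((hv.continuous.pow 2).const_mul b).continuousOn.integrableOn_compact (isCompact_closedBall 0 R)
  have hcs := sq_integral_gibbsWeight_mul_mul_fderiv_self_le (μ := μ) hγ hc hv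
  have hibp := integral_gibbsFieldDiv_mul_sq (μ := μ) hγ (γ / 2 - 1) hc hv
  have hdrift_int : ∫ x, gibbsFieldDiv γ (γ / 2 - 1) x * v x ^ 2 ∂μ ≤
      -(γ / 2) * ∫ x, gibbsWeight γ (γ - 1) x * v x ^ 2 ∂μ
        + b * ∫ x in closedBall 0 R, v x ^ 2 ∂μ := by
    rw [← integral_const_mul, ← integral_const_mul, ← integral_indicator measurableSet_closedBall,
      ← integral_add (hQ.const_mul _) (hball.integrable_indicator measurableSet_closedBall)]
    refine integral_mono (integrable_gibbsFieldDiv_mul hγ _ (hv.continuous.pow 2)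
      ((isBigO_norm_cocompact_of_lipschitzWith hv).pow 2))
      ((hQ.const_mul _).add (hball.integrable_indicator measurableSet_closedBall)) fun x ↦ ?_
    rw [Set.indicator_mul_left, ← mul_assoc, ← add_mul]
    exact mul_le_mul_of_nonneg_right (hdrift x) (sq_nonneg _)
  set Q := ∫ x, gibbsWeight γ (γ - 1) x * v x ^ 2 ∂μ
  set D := ∫ x, gibbsWeight γ 0 x * ‖fderiv ℝ v x‖ ^ 2 ∂μ
  set T := ∫ x, gibbsWeight γ (γ / 2 - 1) x * (v x * fderiv ℝ v x x) ∂μ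
  have young : 2 * T ≤ γ / 4 * Q + 4 / γ * D := by
    refine two_mul_le_add_of_sq_le_mul (mul_nonneg (by positivity) ?_)
      (mul_nonneg (by positivity) ?_) (hcs.trans_eq (by field_simp))
    · exact integral_nonneg fun x ↦ mul_nonneg (gibbsWeight_pos _ _ _).le (sq_nonneg _)
    · exact integral_nonneg fun x ↦ mul_nonneg (gibbsWeight_pos _ _ _).le (sq_nonneg _)
  linarith

lemma exists_integral_gibbsWeight_mul_sub_sq_le (hγ : 0 < γ) : ∃ C > 0,
    ∀ (u : E → ℝ) (K : ℝ≥0), ContDiff ℝ 1 u → LipschitzWith K u → ∃ m : ℝ,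
      ∫ x, gibbsWeight γ (γ - 1) x * (u x - m) ^ 2 ∂μ ≤
        C * ∫ x, gibbsWeight γ 0 x * ‖fderiv ℝ u x‖ ^ 2 ∂μ := by
  obtain ⟨R, b, hb, henergy⟩ := exists_integral_gibbsWeight_mul_sq_le (E := E) (μ := μ) hγ
  obtain ⟨L, hL, hlocal⟩ := exists_setIntegral_le_mul_integral_mul (μ := μ)
    (isCompact_closedBall (0 : E) R) (continuous_gibbsWeight γ 0) (gibbsWeight_pos γ 0)
  set P : ℝ := diam (closedBall (0 : E) R) ^ 2 * 2 ^ finrank ℝ E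
  refine ⟨4 / γ * (4 / γ + b * (P * L)), by positivity, fun u K hc hu ↦ ?_⟩
  obtain ⟨m, hm⟩ := exists_setIntegral_norm_sub_sq_le (μ := μ) (convex_closedBall (0 : E) R)
    (isCompact_closedBall 0 R) hc
  refine ⟨m, ?_⟩
  set D := ∫ x, gibbsWeight γ 0 x * ‖fderiv ℝ u x‖ ^ 2 ∂μ
  have hball : ∫ x in closedBall 0 R, (u x - m) ^ 2 ∂μ ≤ P * L * D := by
    simp only [norm_eq_abs, sq_abs] at hm
    rw [mul_assoc]
    refine hm.trans (mul_le_mul_of_nonneg_left ?_ (by positivity))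
    exact hlocal _ (fun x ↦ sq_nonneg _) (integrable_gibbsWeight_mul_norm_fderiv_sq hγ 0 hc hu)
  have hm_energy := henergy (fun x ↦ u x - m) K (hc.sub contDiff_const)
    (by simpa using hu.sub (.const m))
  simp only [fderiv_sub_const] at hm_energy
  calc ∫ x, gibbsWeight γ (γ - 1) x * (u x - m) ^ 2 ∂μ
      = 4 / γ * (γ / 4 * ∫ x, gibbsWeight γ (γ - 1) x * (u x - m) ^ 2 ∂μ) := by field_simp
    _ ≤ 4 / γ * (4 / γ * D + b * (P * L * D)) := by
        gcongr
        exact hm_energy.trans (by gcongr)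
    _ = 4 / γ * (4 / γ + b * (P * L)) * D := by ring

lemma exists_integral_gibbsWeight_mul_sq_le_of_integral_eq_zero (hγ : 0 < γ) (t : ℝ) :
    ∃ C > 0, ∀ (u : E → ℝ) (K : ℝ≥0), ContDiff ℝ 1 u → LipschitzWith K u →
      ∫ x, gibbsWeight γ t x * u x ∂μ = 0 →
      ∫ x, gibbsWeight γ (γ - 1) x * u x ^ 2 ∂μ ≤
        C * ∫ x, gibbsWeight γ 0 x * ‖fderiv ℝ u x‖ ^ 2 ∂μ := by
  obtain ⟨C, hC, hpoincare⟩ := exists_integral_gibbsWeight_mul_sub_sq_le (E := E) (μ := μ) hγ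
  have hw (s : ℝ) := integral_gibbsWeight_pos (E := E) (μ := μ) hγ s
  set c := 2 + 2 * (∫ x, gibbsWeight γ (γ - 1) x ∂μ) *
    (∫ x, gibbsWeight γ (2 * t - (γ - 1)) x ∂μ) / (∫ x, gibbsWeight γ t x ∂μ) ^ 2
  have hc : 0 < c :=
    add_pos two_pos (div_pos (mul_pos (mul_pos two_pos (hw _)) (hw _)) (pow_pos (hw _) 2))
  refine ⟨c * C, mul_pos hc hC, fun u K hu hlip hmean ↦ ?_⟩
  obtain ⟨m, hm⟩ := hpoincare u K hu hlip
  calc ∫ x, gibbsWeight γ (γ - 1) x * u x ^ 2 ∂μ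
      ≤ c * ∫ x, gibbsWeight γ (γ - 1) x * (u x - m) ^ 2 ∂μ :=
        integral_gibbsWeight_mul_sq_le_of_integral_eq_zero hγ _ _ hlip hmean m
    _ ≤ c * (C * ∫ x, gibbsWeight γ 0 x * ‖fderiv ℝ u x‖ ^ 2 ∂μ) := by gcongr
    _ = c * C * ∫ x, gibbsWeight γ 0 x * ‖fderiv ℝ u x‖ ^ 2 ∂μ := (mul_assoc _ _ _).symm

end WeightedPoincare

theorem weak_poincare_general {E : Type*} [NormedAddCommGroup E] [InnerProductSpace ℝ E]
    [FiniteDimensional ℝ E] [MeasurableSpace E] [BorelSpace E] (μ : Measure E)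
    [μ.IsAddHaarMeasure] {γ : ℝ} (hγ : 0 < γ) :
    ∃ lam > (0 : ℝ), ∀ (u : E → ℝ) (K : ℝ≥0), ContDiff ℝ 1 u → LipschitzWith K u →
      ∫ x, u x * exp (-(1 + ‖x‖ ^ 2) ^ (γ / 2)) * (1 + ‖x‖ ^ 2) ^ (1 - γ) ∂μ = 0 →
      ∫ x, u x ^ 2 * (1 + ‖x‖ ^ 2) ^ (γ - 1) * exp (-(1 + ‖x‖ ^ 2) ^ (γ / 2)) ∂μ ≤
        lam * ∫ x, ‖gradient u x‖ ^ 2 * exp (-(1 + ‖x‖ ^ 2) ^ (γ / 2)) ∂μ := by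
  obtain ⟨lam, hlam, h⟩ :=
    exists_integral_gibbsWeight_mul_sq_le_of_integral_eq_zero (E := E) (μ := μ) hγ (1 - γ)
  refine ⟨lam, hlam, fun u K hu hlip hmean ↦ ?_⟩
  convert h u K hu hlip ?_ using 2
  · congr 1 with x; rw [gibbsWeight]; ring
  · congr 1 with x; simp [gibbsWeight, gradient, mul_comm]
  · rw [← hmean]; congr 1 with x; rw [gibbsWeight]; ring

theorem weak_poincare (d : ℕ) (γ : ℝ) (hγ : γ ∈ Set.Ioo (0:ℝ) 1) :
    ∃ lam > (0:ℝ),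
      ∀ u : EuclideanSpace ℝ (Fin d) → ℝ, ContDiff ℝ (⊤ : ℕ∞) u → HasCompactSupport u →
        (∫ x : EuclideanSpace ℝ (Fin d),
            u x * Real.exp (-(1 + ‖x‖ ^ 2) ^ (γ/2)) * (1 + ‖x‖ ^ 2) ^ (1 - γ)) = 0 →
        (∫ x : EuclideanSpace ℝ (Fin d),
            u x ^ 2 * (1 + ‖x‖ ^ 2) ^ (γ - 1) * Real.exp (-(1 + ‖x‖ ^ 2) ^ (γ/2)))
          ≤ lam * ∫ x : EuclideanSpace ℝ (Fin d),
              ‖gradient u x‖ ^ 2 * Real.exp (-(1 + ‖x‖ ^ 2) ^ (γ/2)) := by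
  obtain ⟨lam, hlam, h⟩ := weak_poincare_general (E := EuclideanSpace ℝ (Fin d)) volume hγ.1
  refine ⟨lam, hlam, fun u hu hcs hmean ↦ ?_⟩
  have hu1 : ContDiff ℝ 1 u := hu.of_le (mod_cast le_top)
  obtain ⟨K, hK⟩ := hu1.lipschitzWith_of_hasCompactSupport hcs one_ne_zero
  exact h u K hu1 hK hmean
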